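/- Let p : I × I → [0,∞) be a kernel that is substochastic (Σ_t p(s,t) ≤ 1 for every s ∈ I) and satisfies hypotheses (H1), (H2), (H3) and (H4). Fix z ∈ I, q ∈ (0,1), C > 0, and let b be a q-perturbation of p on Δ_z. Then for every end ω of I with ω|_{|z|} = z and every ε > 0 there exists k ≥ |z| such that for every s ∈ Δ_{ω|k} there is ℓ ≥ |z| with |G_b(s,t) − G_p(s,t)| ≤ ε·G_p(s,t) for all t ∈ Δ_{ω|ℓ}; equivalently, the ratio of the Martin kernels of b and p tends to 1 at the end ω. (The concluding Remark of the paper.) -/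

import Mathlib

open scoped ENNReal

namespace Paper

/-- Words in the two letters `α, β`: the free monoid on two generators, as `List Bool`.
The head of the list is the leftmost letter. -/
abbrev Word := List Bool

/-- Length of the longest common prefix of two lists. -/
def lcpLen : List Bool → List Bool → ℕ
  | a :: s, b :: t => if a = b then lcpLen s t + 1 else 0
  | _, _ => 0

/-- Length of the longest common suffix of two words. -/
def lcsLen (s t : Word) : ℕ := lcpLen s.reverse t.reverse

/-- The tree metric on `Word`: `d(s,t) = (|s| - k) + (|t| - k)`, `k` the length of the
longest common suffix. -/
def treeDist (s t : Word) : ℕ := (s.length - lcsLen s t) + (t.length - lcsLen s t)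

/-- The branch `Δ_x = {u x : u ∈ I}` of words having `x` as a suffix. -/
def Delta (x : Word) : Set Word := {s | x <:+ s}

/-- The geodesic segment `[s,t] = {v : d(s,v) + d(v,t) = d(s,t)}`. -/
def geodesic (s t : Word) : Set Word := {v | treeDist s v + treeDist v t = treeDist s t}

/-- Paths of `n` steps from `s` to `t` staying in `Ω`. -/
def pathSet {X : Type*} (Ω : Set X) (n : ℕ) (s t : X) : Set (Fin (n + 1) → X) :=
  {σ | σ 0 = s ∧ σ (Fin.last n) = t ∧ ∀ i, σ i ∈ Ω}

/-- The weight `∏ a(s_i, s_{i+1})` of a path, as an extended nonnegative real. -/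
noncomputable def weightE {X : Type*} (a : X → X → ℝ) (n : ℕ) (σ : Fin (n + 1) → X) : ℝ≥0∞ :=
  ∏ i : Fin n, ENNReal.ofReal (a (σ i.castSucc) (σ i.succ))

/-- The `n`-step kernel `a⁽ⁿ⁾(s,t)` of the kernel `a` on `Ω`, with values in `[0,∞]`. -/
noncomputable def nStepE {X : Type*} (Ω : Set X) (a : X → X → ℝ) (n : ℕ) (s t : X) : ℝ≥0∞ :=
  ∑' σ : pathSet Ω n s t, weightE a n σ.1

/-- The Green kernel `G_a(s,t) = Σ_n a⁽ⁿ⁾(s,t)` of `a` on `Ω`, with values in `[0,∞]`. -/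
noncomputable def greenE {X : Type*} (Ω : Set X) (a : X → X → ℝ) (s t : X) : ℝ≥0∞ :=
  ∑' n : ℕ, nStepE Ω a n s t

/-- The weight of a path, real version (for signed kernels). -/
noncomputable def weightR {X : Type*} (a : X → X → ℝ) (n : ℕ) (σ : Fin (n + 1) → X) : ℝ :=
  ∏ i : Fin n, a (σ i.castSucc) (σ i.succ)

/-- The `n`-step kernel of a signed kernel `a` on `Ω`. -/
noncomputable def nStepR {X : Type*} (Ω : Set X) (a : X → X → ℝ) (n : ℕ) (s t : X) : ℝ :=
  ∑' σ : pathSet Ω n s t, weightR a n σ.1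

/-- The Green kernel of a signed kernel `a` on `Ω`, as a real number. -/
noncomputable def greenR {X : Type*} (Ω : Set X) (a : X → X → ℝ) (s t : X) : ℝ :=
  ∑' n : ℕ, nStepR Ω a n s t

/-- The Green kernel of `|a|`: finiteness of this expresses absolute convergence of the
series defining the Green kernel of `a`. -/
noncomputable def greenAbs {X : Type*} (Ω : Set X) (a : X → X → ℝ) (s t : X) : ℝ≥0∞ :=
  greenE Ω (fun u v => |a u v|) s t

/-- (H1): finite range `S`. -/
def H1 (p : Word → Word → ℝ) (S : ℕ) : Prop := ∀ s t, S < treeDist s t → p s t = 0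

/-- (H2): nonzero transition probabilities are bounded below by `δ₀`. -/
def H2 (p : Word → Word → ℝ) (δ₀ : ℝ) : Prop := ∀ s t, 0 < p s t → δ₀ ≤ p s t

/-- (H3): uniform irreducibility. -/
def H3 (p : Word → Word → ℝ) (δ₀ : ℝ) (K : ℕ) : Prop :=
  ∀ s t, treeDist s t = 1 → ∃ k ≤ K, ∃ u : ℕ → Word, u 0 = s ∧ u k = t ∧
    ∀ i < k, ∀ x : Word, δ₀ ≤ p (u i ++ x) (u (i + 1) ++ x)

/-- The operator `(Pf)(s) = Σ_t p(s,t) f(t)` extends to a bounded operator of norm at most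
`lam` on `ℓ²(X, m)`, expressed via the associated bilinear form on finitely supported
functions. -/
def opNormBound {X : Type*} (m : X → ℝ) (p : X → X → ℝ) (lam : ℝ) : Prop :=
  ∀ f g : X → ℝ, (Function.support f).Finite → (Function.support g).Finite →
    |∑' s, m s * g s * ∑' t, p s t * f t| ≤
      lam * Real.sqrt (∑' x, m x * f x ^ 2) * Real.sqrt (∑' x, m x * g x ^ 2)

/-- (H4): there is a weight `m` for which `P` is bounded of norm at most `lam` on `ℓ²(I,m)`. -/
def H4 (p : Word → Word → ℝ) (m : Word → ℝ) (lam : ℝ) : Prop :=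
  (∀ x, 0 < m x) ∧ opNormBound m p lam

/-- Substochasticity: `Σ_t p(s,t) ≤ 1` for every `s`. -/
def Substochastic (p : Word → Word → ℝ) : Prop :=
  ∀ s, (∑' t, ENNReal.ofReal (p s t)) ≤ 1

/-- `b` is a `q`-perturbation of `p` on `Δ_z` (with constant `C`). -/
def Perturb (p b : Word → Word → ℝ) (z : Word) (q C : ℝ) : Prop :=
  ∀ s t, s ∈ Delta z → t ∈ Delta z →
    |b s t| ≤ p s t ∧ |b s t - p s t| ≤ C * q ^ s.length

/-- The word `ω|k = ω(k-1) ω(k-2) ⋯ ω(0)` of length `k` determined by an end `ω`. -/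
def endWord (ω : ℕ → Bool) (k : ℕ) : Word := (List.range k).reverse.map ω

/-- The last-entrance kernel `M_p(s,u)`: sum over paths from `s` to `u` of length at least
one whose second-to-last point lies outside `Δ_x`. -/
noncomputable def lastEnter (p : Word → Word → ℝ) (x s u : Word) : ℝ≥0∞ :=
  ∑' m : ℕ, ∑' σ : {σ : Fin (m + 2) → Word //
      σ ∈ pathSet Set.univ (m + 1) s u ∧ σ ((Fin.last m).castSucc) ∉ Delta x},
    weightE p (m + 1) σ.1

/-- The quantum integer `[n]_q = (q⁻ⁿ - qⁿ)/(q⁻¹ - q)`. -/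
noncomputable def qInt (q : ℝ) (n : ℕ) : ℝ := (q ^ (-(n : ℤ)) - q ^ (n : ℤ)) / (q⁻¹ - q)

/-- The lengths of the blocks in the canonical factorization of a word into maximal
alternating subwords. -/
def blockLens : Word → List ℕ
  | [] => []
  | [_] => [1]
  | a :: b :: rest =>
    match blockLens (b :: rest) with
    | [] => [1]
    | k :: ks => if a = b then 1 :: (k :: ks) else (k + 1) :: ks

/-- The quantum dimension `dim_q(x) = Π_i [|x_i| + 1]_q` over the blocks of `x`. -/
noncomputable def dimq (q : ℝ) (x : Word) : ℝ := ((blockLens x).map fun L => qInt q (L + 1)).prod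

/-- The classical dimension `dim(x) = Π_i (|x_i| + 1)` over the blocks of `x`. -/
noncomputable def dimn (x : Word) : ℝ := ((blockLens x).map fun L => (L + 1 : ℝ)).prod

/-- The involution `x ↦ x̄`: reverse the word and exchange the two letters. -/
def bar (x : Word) : Word := (x.map fun a => !a).reverse

/-- The fusion multiplicity `mᵗ_{r,s}`: the number of words `z` such that `r = r₀ z`,
`s = z̄ s₀`, `t = r₀ s₀` for some `r₀, s₀`. -/
noncomputable def fuse (r s t : Word) : ℕ :=
  {z : Word | ∃ r₀ s₀ : Word, r = r₀ ++ z ∧ s = bar z ++ s₀ ∧ t = r₀ ++ s₀}.ncard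

/-- A finitely supported probability measure on `Word`. -/
def IsProbMeasure (μ : Word → ℝ) : Prop :=
  (∀ x, 0 ≤ μ x) ∧ (Function.support μ).Finite ∧ ∑' x, μ x = 1

/-- The transition kernel `p_μ(s,t) = Σ_r μ(r) mᵗ_{r,s} dim_q(t)/(dim_q(r) dim_q(s))`. -/
noncomputable def pMu (q : ℝ) (μ : Word → ℝ) (s t : Word) : ℝ :=
  ∑' r, μ r * (fuse r s t : ℝ) * dimq q t / (dimq q r * dimq q s)

/-- The `q`-binomial coefficient. -/
noncomputable def qbinom (q : ℝ) (n k : ℕ) : ℝ :=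
  q ^ (-((k * (n - k) : ℕ) : ℤ)) *
    ∏ i ∈ Finset.range k, (1 - q ^ (2 * (n - i))) / (1 - q ^ (2 * (k - i)))


section helpers

noncomputable def PN (k : Word → Word → ℝ≥0∞) : ℕ → Word → Word → ℝ≥0∞
  | 0, s, t => if s = t then 1 else 0
  | n + 1, s, t => ∑' v, k s v * PN k n v t

noncomputable def GG (k : Word → Word → ℝ≥0∞) (s t : Word) : ℝ≥0∞ := ∑' n, PN k n s t

lemma psum_succ (k : Word → Word → ℝ≥0∞) (N : ℕ) (s t : Word) :
    ∑ n ∈ Finset.range (N + 1), PN k n s t =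
      (if s = t then 1 else 0) + ∑' v, k s v * ∑ n ∈ Finset.range N, PN k n v t := by
  rw [Finset.sum_range_succ', add_comm]
  congr 1
  simp only [PN, Finset.mul_sum]
  rw [Summable.tsum_finsetSum]
  intros; exact ENNReal.summable

lemma GG_eq (k : Word → Word → ℝ≥0∞) (s t : Word) :
    GG k s t = (if s = t then 1 else 0) + ∑' v, k s v * GG k v t := by
  unfold GG
  rw [tsum_eq_zero_add' ENNReal.summable]
  congr 1
  simp only [PN, ← ENNReal.tsum_mul_left]
  rw [ENNReal.tsum_comm]

lemma GG_super (k : Word → Word → ℝ≥0∞) (s t : Word) :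
    ∑' v, k s v * GG k v t ≤ GG k s t := by
  rw [GG_eq k s t]; exact le_add_self

lemma one_le_GG (k : Word → Word → ℝ≥0∞) (s : Word) : 1 ≤ GG k s s := by
  rw [GG_eq]; simp

lemma GG_step (k : Word → Word → ℝ≥0∞) (s v t : Word) : k s v * GG k v t ≤ GG k s t :=
  le_trans (ENNReal.le_tsum v) (GG_super k s t)

lemma GG_max (k : Word → Word → ℝ≥0∞) (u : Word) (c : ℝ≥0∞) (A : Set Word)
    (H : Word → ℝ≥0∞)
    (h : ∀ s ∈ A, GG k s u * c ≤ H s ∨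
      (s ≠ u ∧ (∀ v, k s v ≠ 0 → v ∈ A) ∧ ∑' v, k s v * H v ≤ H s)) :
    ∀ s ∈ A, GG k s u * c ≤ H s := by
  have key : ∀ N, ∀ s ∈ A, (∑ n ∈ Finset.range N, PN k n s u) * c ≤ H s := by
    intro N
    induction N with
    | zero => intro s _; simp
    | succ N ih =>
      intro s hs
      rcases h s hs with h' | ⟨hne, hA, hH⟩
      · refine le_trans ?_ h'
        gcongr
        exact ENNReal.sum_le_tsum _
      · rw [psum_succ, if_neg hne, zero_add, ← ENNReal.tsum_mul_right]
        refine le_trans (ENNReal.tsum_le_tsum fun v => ?_) hH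
        by_cases hv : k s v = 0
        · simp [hv]
        · rw [mul_assoc]
          gcongr
          exact ih v (hA v hv)
  intro s hs
  unfold GG
  rw [ENNReal.tsum_eq_iSup_nat, ENNReal.iSup_mul]
  exact iSup_le fun N => key N s hs

lemma GG_mul (k : Word → Word → ℝ≥0∞) (s x t : Word) :
    GG k s x * GG k x t ≤ GG k x x * GG k s t := by
  refine GG_max k x (GG k x t) Set.univ (fun s => GG k x x * GG k s t) ?_ s trivial
  intro s _
  by_cases h : s = x
  · subst h; left; exact le_rfl
  · right
    refine ⟨h, fun _ _ => trivial, ?_⟩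
    calc _ = GG k x x * ∑' v, k s v * GG k v t := by
          rw [← ENNReal.tsum_mul_left]; congr 1; ext v; ring
      _ ≤ _ := by gcongr; exact GG_super k s t

lemma GG_sep (k : Word → Word → ℝ≥0∞) (A : Set Word) (B : Finset Word) (s u : Word)
    (hs : s ∈ A) (hu : u ∉ A)
    (hAB : ∀ v ∈ A, ∀ w ∉ A, k v w ≠ 0 → v ∈ B ∨ w ∈ B) :
    GG k s u ≤ ∑ v ∈ B, GG k s v * GG k v u := by
  have := GG_max k u 1 (A ∪ B) (fun s => ∑ v ∈ B, GG k s v * GG k v u) ?_ s (Or.inl hs)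
  · simpa using this
  intro s hs
  by_cases hB : s ∈ B
  · left
    rw [mul_one]
    calc GG k s u = 1 * GG k s u := (one_mul _).symm
      _ ≤ GG k s s * GG k s u := by gcongr; exact one_le_GG k s
      _ ≤ _ := Finset.single_le_sum (f := fun v => GG k s v * GG k v u) (fun _ _ => zero_le) hB
  · right
    have hsA : s ∈ A := by
      rcases hs with h | h
      · exact h
      · exact absurd h hB
    refine ⟨fun h => hu (h ▸ hsA), ?_, ?_⟩
    · intro v hv
      by_cases hvA : v ∈ A
      · exact Or.inl hvA
      · right
        rcases hAB s hsA v hvA hv with h | h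
        · exact absurd h hB
        · exact h
    · calc _ = ∑ w ∈ B, (∑' v, k s v * GG k v w) * GG k w u := by
            simp only [Finset.mul_sum, ← ENNReal.tsum_mul_right]
            rw [Summable.tsum_finsetSum (fun _ _ => ENNReal.summable)]
            simp only [mul_assoc]
        _ ≤ _ := by
            gcongr
            exact GG_super k s _

lemma PN_add (k : Word → Word → ℝ≥0∞) (i j : ℕ) (x y : Word) :
    ∑' u, PN k i x u * PN k j u y = PN k (i + j) x y := by
  induction i generalizing x with
  | zero => simp [PN]
  | succ i ih =>
    rw [Nat.succ_add]
    simp only [PN, ← ENNReal.tsum_mul_right]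
    rw [ENNReal.tsum_comm]
    simp only [mul_assoc, ENNReal.tsum_mul_left, ih]

/-- Last step: weighted Green sum solves the Poisson equation. -/
lemma GG_poisson (k : Word → Word → ℝ≥0∞) (f : Word → ℝ≥0∞) (s : Word) :
    f s + ∑' v, k s v * ∑' u, GG k v u * f u ≤ ∑' u, GG k s u * f u := by
  have : ∀ u, GG k s u * f u = (if s = u then f u else 0) + ∑' v, k s v * (GG k v u * f u) := by
    intro u
    rw [GG_eq, add_mul, ← ENNReal.tsum_mul_right]
    simp only [mul_assoc]
    split_ifs <;> simp
  simp only [this, ENNReal.tsum_add, ← ENNReal.tsum_mul_left]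
  rw [ENNReal.tsum_comm]
  simp

lemma path_rec (n : ℕ) (s t : Word) (F : Word → Word → ℝ≥0∞)
    (H : (Fin (n + 1) → Word) → ℝ≥0∞) :
    ∑' σ : pathSet (Set.univ : Set Word) (n + 1) s t,
        F (σ.1 0) (σ.1 1) * H (fun i => σ.1 i.succ) =
      ∑' v, F s v * ∑' τ : pathSet (Set.univ : Set Word) n v t, H τ.1 := by
  simp only [← ENNReal.tsum_mul_left]
  let e : pathSet (Set.univ : Set Word) (n + 1) s t ≃
      (Σ v, pathSet (Set.univ : Set Word) n v t) :=
    { toFun := fun σ => ⟨σ.1 1, ⟨fun i => σ.1 i.succ, rfl, σ.2.2.1, fun _ => trivial⟩⟩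
      invFun := fun τ => ⟨Fin.cons s τ.2.1, rfl, by
          rw [← Fin.succ_last, Fin.cons_succ]; exact τ.2.2.2.1, fun _ => trivial⟩
      left_inv := by
        rintro ⟨σ, h0, h1, h2⟩
        apply Subtype.ext
        funext i
        refine Fin.cases ?_ (fun i => ?_) i
        · exact h0.symm
        · simp
      right_inv := by
        rintro ⟨v, τ, h0, h1, h2⟩
        subst h0
        rfl }
  rw [← ENNReal.tsum_sigma (fun v (τ : pathSet (Set.univ : Set Word) n v t) => F s v * H τ.1),
    ← e.tsum_eq]
  refine tsum_congr fun σ => ?_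
  obtain ⟨σ, h0, h1, h2⟩ := σ
  simp only [e, Equiv.coe_fn_mk, h0]

lemma nStepE_eq (p : Word → Word → ℝ) (n : ℕ) (s t : Word) :
    nStepE Set.univ p n s t = PN (fun u v => ENNReal.ofReal (p u v)) n s t := by
  induction n generalizing s with
  | zero =>
    unfold nStepE weightE
    simp only [Finset.univ_eq_empty, Finset.prod_empty, PN]
    split_ifs with h
    · subst h
      rw [tsum_eq_single ⟨fun _ => s, rfl, rfl, fun _ => trivial⟩]
      rintro ⟨σ, h0, h1, h2⟩ hne
      exact absurd (Subtype.ext (funext fun i => by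
        have hi : i = 0 := by omega
        rw [hi]; exact h0)) hne
    · have : IsEmpty (pathSet (Set.univ : Set Word) 0 s t) :=
        ⟨fun σ => h (σ.2.1.symm.trans σ.2.2.1)⟩
      simp
  | succ n ih =>
    unfold nStepE weightE
    simp only [PN, ← ih]
    unfold nStepE
    rw [← path_rec n s t (fun u v => ENNReal.ofReal (p u v)) (weightE p n)]
    refine tsum_congr fun σ => ?_
    rw [Fin.prod_univ_succ]
    rfl

lemma greenE_eq (p : Word → Word → ℝ) (s t : Word) :
    greenE Set.univ p s t = GG (fun u v => ENNReal.ofReal (p u v)) s t := by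
  unfold greenE GG
  simp only [nStepE_eq]

lemma lcpLen_le_left : ∀ s t : List Bool, lcpLen s t ≤ s.length
  | [], t => by simp [lcpLen]
  | a :: s, [] => by simp [lcpLen]
  | a :: s, b :: t => by
    have := lcpLen_le_left s t
    simp only [lcpLen, List.length_cons]; split_ifs <;> omega

lemma lcpLen_le_right : ∀ s t : List Bool, lcpLen s t ≤ t.length
  | [], t => by simp [lcpLen]
  | a :: s, [] => by simp [lcpLen]
  | a :: s, b :: t => by
    have := lcpLen_le_right s t
    simp only [lcpLen, List.length_cons]; split_ifs <;> omega

lemma lcpLen_comm : ∀ s t : List Bool, lcpLen s t = lcpLen t s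
  | [], [] => rfl
  | [], b :: t => by simp [lcpLen]
  | a :: s, [] => by simp [lcpLen]
  | a :: s, b :: t => by
    have := lcpLen_comm s t
    simp only [lcpLen, eq_comm, this]

lemma prefix_of_le_lcpLen : ∀ (x s t : List Bool), x <+: s → x.length ≤ lcpLen s t → x <+: t
  | [], s, t => by simp
  | c :: x, [], t => by simp
  | c :: x, a :: s, [] => by simp [lcpLen]
  | c :: x, a :: s, b :: t => by
    intro h hl
    have ih := prefix_of_le_lcpLen x s t
    simp only [lcpLen, List.length_cons] at hl
    rw [List.cons_prefix_cons] at h ⊢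
    split_ifs at hl with hab
    · exact ⟨h.1.trans hab, ih h.2 (by omega)⟩
    · omega

lemma lcpLen_append : ∀ (r l : List Bool), lcpLen (r ++ l) r = r.length
  | [], l => by cases l <;> simp [lcpLen]
  | a :: r, l => by simp [lcpLen, lcpLen_append r l]

lemma treeDist_comm (s t : Word) : treeDist s t = treeDist t s := by
  unfold treeDist lcsLen
  rw [lcpLen_comm, add_comm]

lemma treeDist_cons (a : Bool) (w : Word) : treeDist (a :: w) w = 1 := by
  unfold treeDist lcsLen
  rw [List.reverse_cons, lcpLen_append]
  simp

lemma treeDist_cons' (a : Bool) (w : Word) : treeDist w (a :: w) = 1 := by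
  rw [treeDist_comm, treeDist_cons]

lemma length_le_treeDist (s t : Word) : s.length ≤ t.length + treeDist s t := by
  have := lcpLen_le_right s.reverse t.reverse
  rw [List.length_reverse] at this
  unfold treeDist lcsLen
  omega

lemma length_le_of_cross (x v w : Word) (S : ℕ) (hv : x <:+ v) (hw : ¬ x <:+ w)
    (h : treeDist v w ≤ S) : v.length ≤ x.length + S := by
  have : lcsLen v w < x.length := by
    by_contra hc
    push Not at hc
    apply hw
    rw [← List.reverse_prefix] at hv ⊢
    exact prefix_of_le_lcpLen _ _ _ hv (by rw [List.length_reverse]; exact hc)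
  unfold treeDist at h
  omega

/-- The longest common suffix. -/
lemma exists_meet (s u : Word) : ∃ x : Word, x <:+ s ∧ x <:+ u ∧
    (∀ w : Word, w <:+ s → w <:+ u → w <:+ x) ∧
    (s = x ∨ ∃ a, (a :: x) <:+ s ∧ ¬ (a :: x) <:+ u) := by
  induction s with
  | nil =>
    exact ⟨[], by simp, by simp, fun w h _ => h, Or.inl rfl⟩
  | cons a s ih =>
    by_cases h : (a :: s) <:+ u
    · exact ⟨a :: s, List.suffix_refl _, h, fun w h _ => h, Or.inl rfl⟩
    · obtain ⟨x, h1, h2, h3, h4⟩ := ih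
      refine ⟨x, h1.trans (List.suffix_cons a s), h2, ?_, Or.inr ?_⟩
      · intro w hw hwu
        rw [List.suffix_cons_iff] at hw
        rcases hw with rfl | hw
        · exact absurd hwu h
        · exact h3 w hw hwu
      · rcases h4 with rfl | ⟨c, hc, hcu⟩
        · exact ⟨a, List.suffix_refl _, h⟩
        · exact ⟨c, hc.trans (List.suffix_cons a s), hcu⟩

lemma finite_words (N : ℕ) : {u : Word | u.length ≤ N}.Finite := List.finite_length_le Bool N

noncomputable def RN (p : Word → Word → ℝ) (x : Word) : ℕ → Word → ℝ
  | 0, s => if s = x then 1 else 0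
  | n + 1, s => ∑' t, p s t * RN p x n t

section
variable {p : Word → Word → ℝ} {S : ℕ}

lemma RN_supp (h1 : H1 p S) (x : Word) (n : ℕ) (s : Word)
    (h : RN p x n s ≠ 0) : s.length ≤ x.length + n * S := by
  induction n generalizing s with
  | zero =>
    simp only [RN] at h
    have : s = x := by by_contra hc; simp [hc] at h
    simp [this]
  | succ n ih =>
    simp only [RN] at h
    have : ∃ t, p s t * RN p x n t ≠ 0 := by
      by_contra hc
      push Not at hc
      simp [hc] at h
    obtain ⟨t, ht⟩ := this
    have h2 := ih t (right_ne_zero_of_mul ht)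
    have h3 : treeDist s t ≤ S := by
      by_contra hc
      exact (left_ne_zero_of_mul ht) (h1 s t (by omega))
    have h4 := length_le_treeDist s t
    have : (n + 1) * S = n * S + S := by ring
    omega

lemma RN_fin (h1 : H1 p S) (x : Word) (n : ℕ) : (Function.support (RN p x n)).Finite :=
  (finite_words (x.length + n * S)).subset fun s hs => RN_supp h1 x n s hs

lemma RN_nonneg (hp : ∀ s t, 0 ≤ p s t) (x : Word) (n : ℕ) (s : Word) : 0 ≤ RN p x n s := by
  induction n generalizing s with
  | zero => simp only [RN]; split_ifs <;> norm_num
  | succ n ih => exact tsum_nonneg fun t => mul_nonneg (hp s t) (ih t)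

lemma PN_eq_RN (hp : ∀ s t, 0 ≤ p s t) (h1 : H1 p S) (x : Word) (n : ℕ) (s : Word) :
    PN (fun u v => ENNReal.ofReal (p u v)) n s x = ENNReal.ofReal (RN p x n s) := by
  induction n generalizing s with
  | zero => simp only [PN, RN]; split_ifs <;> simp
  | succ n ih =>
    simp only [PN, RN, ih]
    rw [ENNReal.ofReal_tsum_of_nonneg (fun t => mul_nonneg (hp s t) (RN_nonneg hp x n t))]
    · refine tsum_congr fun t => ?_
      rw [ENNReal.ofReal_mul (hp s t)]
    · apply summable_of_hasFiniteSupport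
      exact (RN_fin h1 x n).subset fun t ht => right_ne_zero_of_mul ht

lemma RN_norm (h1 : H1 p S) {m : Word → ℝ} {lam : ℝ} (hl : 0 ≤ lam) (h4 : H4 p m lam)
    (x : Word) (n : ℕ) :
    Real.sqrt (∑' s, m s * RN p x n s ^ 2) ≤ lam ^ n * Real.sqrt (m x) := by
  induction n with
  | zero =>
    rw [tsum_eq_single x]
    · simp [RN]
    · intro s hs; simp [RN, hs]
  | succ n ih =>
    have := h4.2 (RN p x n) (RN p x (n + 1)) (RN_fin h1 x n) (RN_fin h1 x (n + 1))
    have e : ∑' s, m s * RN p x (n + 1) s * ∑' t, p s t * RN p x n t =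
        ∑' s, m s * RN p x (n + 1) s ^ 2 := by
      refine tsum_congr fun s => ?_
      rw [pow_two, mul_assoc]; rfl
    rw [e] at this
    have hnn : 0 ≤ ∑' s, m s * RN p x (n + 1) s ^ 2 :=
      tsum_nonneg fun s => mul_nonneg (h4.1 s).le (sq_nonneg _)
    rw [abs_of_nonneg hnn] at this
    set X := Real.sqrt (∑' s, m s * RN p x (n + 1) s ^ 2) with hX
    have hX0 : 0 ≤ X := Real.sqrt_nonneg _
    have hX2 : ∑' s, m s * RN p x (n + 1) s ^ 2 = X * X := (Real.mul_self_sqrt hnn).symm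
    rw [hX2] at this
    have h5 : X ≤ lam * Real.sqrt (∑' s, m s * RN p x n s ^ 2) := by
      by_cases hz : X = 0
      · rw [hz]; positivity
      · exact le_of_mul_le_mul_right this (lt_of_le_of_ne hX0 (Ne.symm hz))
    calc X ≤ _ := h5
      _ ≤ lam * (lam ^ n * Real.sqrt (m x)) := by gcongr
      _ = _ := by ring

lemma RN_diag (hp : ∀ s t, 0 ≤ p s t) (h1 : H1 p S) {m : Word → ℝ} {lam : ℝ} (hl : 0 ≤ lam)
    (h4 : H4 p m lam) (x : Word) (n : ℕ) : RN p x n x ≤ lam ^ n := by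
  have h := RN_norm h1 hl h4 x n
  have hm := h4.1 x
  have h5 : m x * RN p x n x ^ 2 ≤ ∑' s, m s * RN p x n s ^ 2 := by
    refine Summable.le_tsum (f := fun s => m s * RN p x n s ^ 2) ?_ x ?_
    · apply summable_of_hasFiniteSupport
      refine (RN_fin h1 x n).subset fun t ht => ?_
      intro h0
      apply ht
      simp [h0]
    · intro s _
      exact mul_nonneg (h4.1 s).le (sq_nonneg _)
  have h6 := (Real.sqrt_le_sqrt h5).trans h
  rw [Real.sqrt_mul hm.le, Real.sqrt_sq (RN_nonneg hp x n x), mul_comm] at h6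
  exact le_of_mul_le_mul_right h6 (Real.sqrt_pos.2 hm)

lemma PN_diag (hp : ∀ s t, 0 ≤ p s t) (h1 : H1 p S) {m : Word → ℝ} {lam : ℝ} (hl : 0 ≤ lam)
    (h4 : H4 p m lam) (x : Word) (n : ℕ) :
    PN (fun u v => ENNReal.ofReal (p u v)) n x x ≤ ENNReal.ofReal lam ^ n := by
  rw [PN_eq_RN hp h1, ← ENNReal.ofReal_pow hl]
  exact ENNReal.ofReal_le_ofReal (RN_diag hp h1 hl h4 x n)

lemma PN_supp (h1 : H1 p S) (n : ℕ) (x u : Word)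
    (h : PN (fun u v => ENNReal.ofReal (p u v)) n x u ≠ 0) :
    x.length ≤ u.length + n * S := by
  induction n generalizing x with
  | zero =>
    simp only [PN] at h
    have : x = u := by by_contra hc; simp [hc] at h
    simp [this]
  | succ n ih =>
    simp only [PN] at h
    have : ∃ v, ENNReal.ofReal (p x v) * PN (fun u v => ENNReal.ofReal (p u v)) n v u ≠ 0 := by
      by_contra hc
      push Not at hc
      simp [hc] at h
    obtain ⟨v, hv⟩ := this
    have h2 := ih v (right_ne_zero_of_mul hv)
    have h3 : treeDist x v ≤ S := by
      by_contra hc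
      exact (left_ne_zero_of_mul hv) (by simp [h1 x v (by omega)])
    have h4 := length_le_treeDist x v
    have : (n + 1) * S = n * S + S := by ring
    omega

/-- The weighted loop sum decays exponentially. -/
lemma loop_sum (hp : ∀ s t, 0 ≤ p s t) (h1 : H1 p S) {m : Word → ℝ} {lam : ℝ} (hl : 0 ≤ lam)
    (h4 : H4 p m lam) (r : ℝ≥0∞) (hr0 : r ≠ 0) (hr1 : r ≤ 1) (x : Word) :
    ∑' u, GG (fun u v => ENNReal.ofReal (p u v)) x u *
      (r ^ u.length * GG (fun u v => ENNReal.ofReal (p u v)) u x) ≤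
    r ^ x.length * ((1 - ENNReal.ofReal lam / r ^ S)⁻¹ * (1 - ENNReal.ofReal lam)⁻¹) := by
  set k : Word → Word → ℝ≥0∞ := fun u v => ENNReal.ofReal (p u v) with hk
  set L := ENNReal.ofReal lam
  have hrt : r ≠ ⊤ := ne_top_of_le_ne_top ENNReal.one_ne_top hr1
  have hrS0 : r ^ S ≠ 0 := pow_ne_zero _ hr0
  have hrSt : r ^ S ≠ ⊤ := ENNReal.pow_ne_top hrt
  have hb : ∀ i j u, PN k i x u * (r ^ u.length * PN k j u x) ≤
      r ^ x.length * ((r ^ S)⁻¹ ^ i * (PN k i x u * PN k j u x)) := by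
    intro i j u
    by_cases h : PN k i x u = 0
    · simp [h]
    · have hlen := PN_supp h1 i x u h
      have : r ^ u.length ≤ r ^ x.length * (r ^ S)⁻¹ ^ i := by
        have h0 : r ^ u.length * (r ^ S) ^ i ≤ r ^ x.length := by
          rw [← pow_mul, ← pow_add]
          exact pow_le_pow_right_of_le_one' hr1 (by rw [mul_comm S i]; exact hlen)
        rw [← ENNReal.inv_pow (a := r ^ S), ← div_eq_mul_inv, ENNReal.le_div_iff_mul_le
          (Or.inl (pow_ne_zero _ hrS0)) (Or.inl (ENNReal.pow_ne_top hrSt))]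
        exact h0
      calc _ ≤ PN k i x u * (r ^ x.length * (r ^ S)⁻¹ ^ i * PN k j u x) := by gcongr
        _ = _ := by ring
  calc _ = ∑' i, ∑' j, ∑' u, PN k i x u * (r ^ u.length * PN k j u x) := by
        simp only [GG, ← ENNReal.tsum_mul_right, ← ENNReal.tsum_mul_left]
        conv_rhs => rw [ENNReal.tsum_comm]
        rw [ENNReal.tsum_comm]
        refine tsum_congr fun i => ?_
        rw [ENNReal.tsum_comm]
    _ ≤ ∑' i, ∑' j, ∑' u, r ^ x.length * ((r ^ S)⁻¹ ^ i * (PN k i x u * PN k j u x)) := by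
        refine ENNReal.tsum_le_tsum fun i => ENNReal.tsum_le_tsum fun j =>
          ENNReal.tsum_le_tsum fun u => hb i j u
    _ = r ^ x.length * ∑' i, ∑' j, (r ^ S)⁻¹ ^ i * PN k (i + j) x x := by
        simp only [ENNReal.tsum_mul_left, PN_add]
    _ ≤ r ^ x.length * ∑' i, ∑' j, (r ^ S)⁻¹ ^ i * L ^ (i + j) := by
        gcongr with i j
        exact PN_diag hp h1 hl h4 x _
    _ = _ := by
        congr 1
        have : ∀ i j, (r ^ S)⁻¹ ^ i * L ^ (i + j) = (L / r ^ S) ^ i * L ^ j := by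
          intro i j
          rw [div_eq_mul_inv, mul_pow, pow_add]; ring
        simp only [this, ENNReal.tsum_mul_left, ENNReal.tsum_geometric, ENNReal.tsum_mul_right]

end
section
variable {k : Word → Word → ℝ≥0∞} {L g : ℝ≥0∞}

def Harn (k : Word → Word → ℝ≥0∞) (L : ℝ≥0∞) : Prop :=
  ∀ a x t, GG k (a :: x) t ≤ L * GG k x t ∧ GG k x t ≤ L * GG k (a :: x) t

lemma harn_word (h : Harn k L) (w x t : Word) :
    GG k (w ++ x) t ≤ L ^ w.length * GG k x t ∧ GG k x t ≤ L ^ w.length * GG k (w ++ x) t := by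
  induction w with
  | nil => simp
  | cons a w ih =>
    obtain ⟨i1, i2⟩ := ih
    obtain ⟨j1, j2⟩ := h a (w ++ x) t
    simp only [List.cons_append, List.length_cons]
    constructor
    · calc _ ≤ _ := j1
        _ ≤ L * (L ^ w.length * GG k x t) := by gcongr
        _ = _ := by ring
    · calc _ ≤ _ := i2
        _ ≤ L ^ w.length * (L * GG k (a :: (w ++ x)) t) := by gcongr
        _ = _ := by ring

lemma harn_right (hg : ∀ x, GG k x x ≤ g) (M : ℝ≥0∞) (s v x : Word)
    (h : GG k x x ≤ M * GG k v x) : GG k s v ≤ M * g * GG k s x := by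
  have h1 : 1 ≤ M * GG k v x := (one_le_GG k x).trans h
  calc GG k s v = GG k s v * 1 := (mul_one _).symm
    _ ≤ GG k s v * (M * GG k v x) := by gcongr
    _ = M * (GG k s v * GG k v x) := by ring
    _ ≤ M * (GG k v v * GG k s x) := mul_le_mul_right (GG_mul k s v x) M
    _ ≤ M * (g * GG k s x) := by gcongr; exact hg v
    _ = _ := by ring

lemma harn_fin (h : Harn k L) (hL : L ≠ ⊤) (hg : ∀ x, GG k x x ≤ g) (hgt : g ≠ ⊤) (s t : Word) :
    GG k s t ≠ ⊤ := by
  have h1 := (harn_word h s [] t).1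
  have h2 := (harn_word h t [] t).2
  rw [List.append_nil] at h1 h2
  refine ne_top_of_le_ne_top ?_ (h1.trans (mul_le_mul_right (h2.trans (mul_le_mul_right (hg t) _)) _))
  exact ENNReal.mul_ne_top (ENNReal.pow_ne_top hL)
    (ENNReal.mul_ne_top (ENNReal.pow_ne_top hL) hgt)

noncomputable def cOne (S : ℕ) (L g : ℝ≥0∞) : ℝ≥0∞ :=
  ((finite_words S).toFinset.card : ℝ≥0∞) * (L ^ S * g * L ^ S)

noncomputable def cTwo (S : ℕ) (L g : ℝ≥0∞) : ℝ≥0∞ := cOne S L g * (L * g * L)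

lemma sep_one {S : ℕ} (hk : ∀ s t, k s t ≠ 0 → treeDist s t ≤ S) (h : Harn k L) (hL : 1 ≤ L)
    (hg : ∀ x, GG k x x ≤ g) (x s u : Word) (hx : ¬ (x <:+ s ↔ x <:+ u)) :
    GG k s u ≤ cOne S L g * (GG k s x * GG k x u) := by
  classical
  let B : Finset Word := (finite_words S).toFinset.image (fun w => w ++ x)
  have hB : ∀ v, x <:+ v → v.length ≤ x.length + S → v ∈ B := by
    rintro v ⟨w, rfl⟩ hv
    simp only [B, Finset.mem_image, Set.Finite.mem_toFinset, Set.mem_ofPred_eq]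
    refine ⟨w, ?_, rfl⟩
    rw [List.length_append] at hv; omega
  have hmain : GG k s u ≤ ∑ v ∈ B, GG k s v * GG k v u := by
    by_cases hs : x <:+ s
    · have hu : ¬ x <:+ u := fun hu => hx ⟨fun _ => hu, fun _ => hs⟩
      refine GG_sep k {v | x <:+ v} B s u hs hu ?_
      intro v hv w hw hvw
      exact Or.inl (hB v hv (length_le_of_cross x v w S hv hw (hk v w hvw)))
    · have hu : x <:+ u := by
        by_contra hu
        exact hx ⟨fun h => absurd h hs, fun h => absurd h hu⟩
      refine GG_sep k {v | ¬ x <:+ v} B s u hs (fun h => h hu) ?_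
      intro v hv w hw hvw
      have hw' : x <:+ w := by
        by_contra hc
        exact hw hc
      refine Or.inr (hB w hw' (length_le_of_cross x w v S hw' hv ?_))
      rw [treeDist_comm]; exact hk v w hvw
  have hterm : ∀ v ∈ B, GG k s v * GG k v u ≤ (L ^ S * g * L ^ S) * (GG k s x * GG k x u) := by
    intro v hv
    simp only [B, Finset.mem_image, Set.Finite.mem_toFinset, Set.mem_ofPred_eq] at hv
    obtain ⟨w, hw, rfl⟩ := hv
    have hLS : L ^ w.length ≤ L ^ S := pow_le_pow_right' hL hw
    have e1 : GG k s (w ++ x) ≤ L ^ S * g * GG k s x := by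
      apply harn_right hg
      exact (harn_word h w x x).2.trans (by gcongr)
    have e2 : GG k (w ++ x) u ≤ L ^ S * GG k x u :=
      (harn_word h w x u).1.trans (by gcongr)
    calc _ ≤ (L ^ S * g * GG k s x) * (L ^ S * GG k x u) := by gcongr
      _ = _ := by ring
  calc _ ≤ _ := hmain
    _ ≤ B.card • ((L ^ S * g * L ^ S) * (GG k s x * GG k x u)) := Finset.sum_le_card_nsmul _ _ _ hterm
    _ ≤ _ := by
      rw [nsmul_eq_mul, cOne, mul_assoc ((finite_words S).toFinset.card : ℝ≥0∞)]
      have hcard : B.card ≤ (finite_words S).toFinset.card := Finset.card_image_le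
      exact mul_le_mul_left (Nat.cast_le.2 hcard) _

lemma one_le_cOne (S : ℕ) (hL : 1 ≤ L) (hg : 1 ≤ g) : 1 ≤ cOne S L g := by
  unfold cOne
  have h1 : 1 ≤ L ^ S := one_le_pow₀ hL
  have h2 : (1 : ℝ≥0∞) ≤ ((finite_words S).toFinset.card : ℝ≥0∞) := by
    have : 0 < (finite_words S).toFinset.card := Finset.card_pos.2 ⟨[], by simp⟩
    exact_mod_cast this
  exact one_le_mul h2 (one_le_mul (one_le_mul h1 hg) h1)

def Sp (x s u : Word) : Prop :=
  s = x ∨ u = x ∨ (¬ (x <:+ s ↔ x <:+ u)) ∨ ∃ a, ¬ ((a :: x) <:+ s ↔ (a :: x) <:+ u)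

lemma Sp.symm {x s u : Word} (h : Sp x s u) : Sp x u s := by
  unfold Sp at *
  rcases h with h | h | h | ⟨a, h⟩
  · exact Or.inr (Or.inl h)
  · exact Or.inl h
  · exact Or.inr (Or.inr (Or.inl fun h' => h h'.symm))
  · exact Or.inr (Or.inr (Or.inr ⟨a, fun h' => h h'.symm⟩))

lemma sep_two {S : ℕ} (hk : ∀ s t, k s t ≠ 0 → treeDist s t ≤ S) (h : Harn k L) (hL : 1 ≤ L)
    (hg : ∀ x, GG k x x ≤ g) (x s u : Word) (hx : Sp x s u) :
    GG k s u ≤ cTwo S L g * (GG k s x * GG k x u) := by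
  have hg1 : 1 ≤ g := (one_le_GG k x).trans (hg x)
  have hLL : 1 ≤ L * g * L := one_le_mul (one_le_mul hL hg1) hL
  have hc1 : cOne S L g ≤ cTwo S L g := le_mul_of_one_le_right' hLL
  have hc2 : 1 ≤ cTwo S L g := (one_le_cOne S hL hg1).trans hc1
  rcases hx with rfl | rfl | hx | ⟨a, hx⟩
  · calc GG k s u = 1 * (1 * GG k s u) := by simp
      _ ≤ _ := by gcongr; exact one_le_GG k s
  · calc GG k s u = 1 * (GG k s u * 1) := by simp
      _ ≤ _ := by gcongr; exact one_le_GG k u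
  · exact (sep_one hk h hL hg x s u hx).trans (by gcongr)
  · have h1 := sep_one hk h hL hg (a :: x) s u hx
    have e1 : GG k s (a :: x) ≤ L * g * GG k s x := harn_right hg L s (a :: x) x (h a x x).2
    have e2 := (h a x u).1
    calc _ ≤ _ := h1
      _ ≤ cOne S L g * ((L * g * GG k s x) * (L * GG k x u)) := by gcongr
      _ = _ := by unfold cTwo; ring

lemma exists_proj_aux (y s t u c d : Word) (hyc : y <:+ c) (hcs : c <:+ s) (hcu : c <:+ u)
    (hc : Sp c s u) (hd : Sp d t u)
    (hdm : ∀ w : Word, w <:+ t → w <:+ u → w <:+ d) (hl : d.length ≤ c.length) :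
    ∃ x, y <:+ x ∧ (x <:+ s ∨ x <:+ t) ∧ Sp x s u ∧ Sp x u t := by
  refine ⟨c, hyc, Or.inl hcs, hc, ?_⟩
  by_cases hct : c <:+ t
  · have h1 := hdm c hct hcu
    have h2 : c = d := h1.eq_of_length_le hl
    exact h2 ▸ hd.symm
  · exact Or.inr (Or.inr (Or.inl fun h => hct (h.1 hcu)))

lemma exists_proj (y s t u : Word) (hs : y <:+ s) (ht : y <:+ t) :
    ∃ x, y <:+ x ∧ (x <:+ s ∨ x <:+ t) ∧ Sp x s u ∧ Sp x u t := by
  by_cases hu : y <:+ u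
  · obtain ⟨c, c1, c2, c3, c4⟩ := exists_meet s u
    obtain ⟨d, d1, d2, d3, d4⟩ := exists_meet t u
    have hc : Sp c s u := by
      rcases c4 with h | ⟨a, h, h'⟩
      · exact Or.inl h
      · exact Or.inr (Or.inr (Or.inr ⟨a, fun e => h' (e.1 h)⟩))
    have hd : Sp d t u := by
      rcases d4 with h | ⟨a, h, h'⟩
      · exact Or.inl h
      · exact Or.inr (Or.inr (Or.inr ⟨a, fun e => h' (e.1 h)⟩))
    rcases le_total d.length c.length with hl | hl
    · exact exists_proj_aux y s t u c d (c3 y hs hu) c1 c2 hc hd d3 hl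
    · obtain ⟨x, x1, x2, x3, x4⟩ :=
        exists_proj_aux y t s u d c (d3 y ht hu) d1 d2 hd hc c3 hl
      exact ⟨x, x1, x2.symm, x4.symm, x3.symm⟩
  · exact ⟨y, List.suffix_refl y, Or.inl hs, Or.inr (Or.inr (Or.inl fun h => hu (h.1 hs))),
      Or.inr (Or.inr (Or.inl fun h => hu (h.2 ht)))⟩

lemma suffix_sum (r : ℝ≥0∞) (n : ℕ) (s : Word) :
    ∑' x : {x : Word | n ≤ x.length ∧ x <:+ s}, r ^ x.1.length ≤ r ^ n * (1 - r)⁻¹ := by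
  let f : {x : Word | n ≤ x.length ∧ x <:+ s} → ℕ := fun x => x.1.length - n
  have hf : Function.Injective f := by
    rintro ⟨x, hx, hxs⟩ ⟨y, hy, hys⟩ h
    simp only [f] at h
    apply Subtype.ext
    have hl : x.length = y.length := by
      omega
    exact (List.suffix_of_suffix_length_le hxs hys hl.le).eq_of_length hl
  calc _ = ∑' x : {x : Word | n ≤ x.length ∧ x <:+ s}, r ^ n * r ^ (f x) := by
        refine tsum_congr fun x => ?_
        rw [← pow_add]
        congr 1
        have := x.2.1
        simp only [f]; omega
    _ = r ^ n * ∑' x, r ^ (f x) := ENNReal.tsum_mul_left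
    _ ≤ r ^ n * ∑' j : ℕ, r ^ j := by
        gcongr
        exact ENNReal.tsum_comp_le_tsum_of_injective hf (fun j => r ^ j)
    _ = _ := by rw [ENNReal.tsum_geometric]

lemma main_sum {S : ℕ} (hk : ∀ s t, k s t ≠ 0 → treeDist s t ≤ S) (h : Harn k L) (hL : 1 ≤ L)
    (hg : ∀ x, GG k x x ≤ g) (r cA : ℝ≥0∞)
    (hA : ∀ x, ∑' u, GG k x u * (r ^ u.length * GG k u x) ≤ r ^ x.length * cA)
    (y s t : Word) (hs : y <:+ s) (ht : y <:+ t) :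
    ∑' u, GG k s u * (r ^ u.length * GG k u t) ≤
      (cTwo S L g ^ 2 * g * cA * (2 * (1 - r)⁻¹)) * r ^ y.length * GG k s t := by
  set c := cTwo S L g
  set X : Set Word := {x : Word | y.length ≤ x.length ∧ x <:+ s} ∪
    {x : Word | y.length ≤ x.length ∧ x <:+ t} with hX
  have hterm : ∀ u, GG k s u * (r ^ u.length * GG k u t) ≤
      ∑' x : X, (c ^ 2 * g * GG k s t) * (GG k x u * (r ^ u.length * GG k u x)) := by
    intro u
    obtain ⟨x, hyx, hxst, h1, h2⟩ := exists_proj y s t u hs ht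
    have hxX : x ∈ X := by
      rcases hxst with hx | hx
      · exact Or.inl ⟨hyx.length_le, hx⟩
      · exact Or.inr ⟨hyx.length_le, hx⟩
    refine le_trans ?_ (ENNReal.le_tsum (⟨x, hxX⟩ : X))
    have e1 := sep_two hk h hL hg x s u h1
    have e2 := sep_two hk h hL hg x u t h2
    calc _ ≤ (c * (GG k s x * GG k x u)) * (r ^ u.length * (c * (GG k u x * GG k x t))) := by
          gcongr
      _ = (c ^ 2 * (GG k x u * (r ^ u.length * GG k u x))) * (GG k s x * GG k x t) := by ring
      _ ≤ (c ^ 2 * (GG k x u * (r ^ u.length * GG k u x))) * (GG k x x * GG k s t) :=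
          mul_le_mul_right (GG_mul k s x t) _
      _ ≤ (c ^ 2 * (GG k x u * (r ^ u.length * GG k u x))) * (g * GG k s t) := by
          gcongr; exact hg x
      _ = _ := by ring
  calc _ ≤ ∑' u, ∑' x : X, (c ^ 2 * g * GG k s t) * (GG k x u * (r ^ u.length * GG k u x)) :=
        ENNReal.tsum_le_tsum hterm
    _ = (c ^ 2 * g * GG k s t) * ∑' x : X, ∑' u, (GG k x u * (r ^ u.length * GG k u x)) := by
        rw [ENNReal.tsum_comm]
        simp only [ENNReal.tsum_mul_left]
    _ ≤ (c ^ 2 * g * GG k s t) * ∑' x : X, r ^ x.1.length * cA := by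
        gcongr with x
        exact hA x
    _ = (c ^ 2 * g * GG k s t) * ((∑' x : X, r ^ x.1.length) * cA) := by
        rw [ENNReal.tsum_mul_right]
    _ ≤ (c ^ 2 * g * GG k s t) * ((r ^ y.length * (1 - r)⁻¹ + r ^ y.length * (1 - r)⁻¹) * cA) := by
        gcongr
        refine (ENNReal.tsum_union_le (fun x : Word => r ^ x.length) _ _).trans ?_
        exact add_le_add (suffix_sum r _ s) (suffix_sum r _ t)
    _ = _ := by ring

end

lemma harn_of_H3 {p : Word → Word → ℝ} {δ₀ : ℝ} (hδ₀ : δ₀ ∈ Set.Ioo (0 : ℝ) 1) {K : ℕ}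
    (h3 : H3 p δ₀ K) :
    Harn (fun u v => ENNReal.ofReal (p u v)) ((ENNReal.ofReal δ₀)⁻¹ ^ K) := by
  have key : ∀ s t, treeDist s t = 1 → ∀ y,
      GG (fun u v => ENNReal.ofReal (p u v)) t y ≤
        (ENNReal.ofReal δ₀)⁻¹ ^ K * GG (fun u v => ENNReal.ofReal (p u v)) s y := by
    intro s t hst y
    obtain ⟨n, hn, u, rfl, rfl, hu⟩ := h3 s t hst
    set k : Word → Word → ℝ≥0∞ := fun u v => ENNReal.ofReal (p u v)
    have hd0 : ENNReal.ofReal δ₀ ≠ 0 := by simpa using hδ₀.1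
    have hdt : ENNReal.ofReal δ₀ ≠ ⊤ := ENNReal.ofReal_ne_top
    have hd1 : 1 ≤ (ENNReal.ofReal δ₀)⁻¹ := by
      rw [ENNReal.one_le_inv]; simpa using hδ₀.2.le
    have : ∀ j ≤ n, GG k (u j) y ≤ (ENNReal.ofReal δ₀)⁻¹ ^ j * GG k (u 0) y := by
      intro j
      induction j with
      | zero => simp
      | succ j ih =>
        intro hj
        have h5 := ih (by omega)
        have h6 := hu j (by omega) []
        rw [List.append_nil, List.append_nil] at h6
        have h7 : ENNReal.ofReal δ₀ * GG k (u (j + 1)) y ≤ GG k (u j) y :=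
          le_trans (mul_le_mul_left (ENNReal.ofReal_le_ofReal h6) _) (GG_step k (u j) (u (j + 1)) y)
        calc GG k (u (j + 1)) y = (ENNReal.ofReal δ₀)⁻¹ * (ENNReal.ofReal δ₀ * GG k (u (j + 1)) y) := by
              rw [← mul_assoc, ENNReal.inv_mul_cancel hd0 hdt, one_mul]
          _ ≤ (ENNReal.ofReal δ₀)⁻¹ * ((ENNReal.ofReal δ₀)⁻¹ ^ j * GG k (u 0) y) := by
              exact mul_le_mul_right (h7.trans h5) _
          _ = _ := by ring
    refine (this n le_rfl).trans ?_
    gcongr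
  intro a x t
  exact ⟨key x (a :: x) (treeDist_cons' a x) t, key (a :: x) x (treeDist_cons a x) t⟩

lemma GG_diag {p : Word → Word → ℝ} {S : ℕ} (hp : ∀ s t, 0 ≤ p s t) (h1 : H1 p S)
    {m : Word → ℝ} {lam : ℝ} (hl : 0 ≤ lam)
    (h4 : H4 p m lam) (x : Word) :
    GG (fun u v => ENNReal.ofReal (p u v)) x x ≤ (1 - ENNReal.ofReal lam)⁻¹ := by
  rw [← ENNReal.tsum_geometric]
  exact ENNReal.tsum_le_tsum fun n => PN_diag hp h1 hl h4 x n

lemma nStepR_ext (Ω : Set Word) (b bt : Word → Word → ℝ)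
    (hin : ∀ u ∈ Ω, ∀ v ∈ Ω, bt u v = b u v) (hout : ∀ u, ∀ v ∉ Ω, bt u v = 0)
    (n : ℕ) (s t : Word) (hs : s ∈ Ω) :
    nStepR Ω b n s t = nStepR Set.univ bt n s t := by
  unfold nStepR
  rw [tsum_subtype (pathSet Ω n s t) (weightR b n),
    tsum_subtype (pathSet Set.univ n s t) (weightR bt n)]
  refine tsum_congr fun σ => ?_
  by_cases h : σ ∈ pathSet (Set.univ : Set Word) n s t
  · rw [Set.indicator_of_mem h]
    by_cases h' : ∀ i, σ i ∈ Ω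
    · rw [Set.indicator_of_mem (show σ ∈ pathSet Ω n s t from ⟨h.1, h.2.1, h'⟩)]
      unfold weightR
      refine Finset.prod_congr rfl fun i _ => ?_
      rw [hin _ (h' _) _ (h' _)]
    · rw [Set.indicator_of_notMem (fun h'' => h' h''.2.2)]
      push Not at h'
      obtain ⟨i, hi⟩ := h'
      revert hi
      refine Fin.cases ?_ (fun j => ?_) i
      · intro hi
        rw [h.1] at hi
        exact absurd hs hi
      · intro hi
        symm
        unfold weightR
        exact Finset.prod_eq_zero (Finset.mem_univ j) (hout _ _ hi)
  · rw [Set.indicator_of_notMem h, Set.indicator_of_notMem]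
    intro h'
    exact h ⟨h'.1, h'.2.1, fun _ => trivial⟩

noncomputable def EE (p b : Word → Word → ℝ) (n : ℕ) (s t : Word) : ℝ≥0∞ :=
  ∑' σ : pathSet (Set.univ : Set Word) n s t, ENNReal.ofReal |weightR b n σ.1 - weightR p n σ.1|

lemma weightE_eq {p : Word → Word → ℝ} (hp : ∀ s t, 0 ≤ p s t) (n : ℕ) (σ : Fin (n + 1) → Word) :
    weightE p n σ = ENNReal.ofReal (weightR p n σ) := by
  unfold weightE weightR
  rw [ENNReal.ofReal_prod_of_nonneg fun i _ => hp _ _]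

lemma weightR_nonneg {p : Word → Word → ℝ} (hp : ∀ s t, 0 ≤ p s t) (n : ℕ)
    (σ : Fin (n + 1) → Word) : 0 ≤ weightR p n σ :=
  Finset.prod_nonneg fun i _ => hp _ _

lemma weightR_succ (p : Word → Word → ℝ) (n : ℕ) (σ : Fin (n + 2) → Word) :
    weightR p (n + 1) σ = p (σ 0) (σ 1) * weightR p n (fun i => σ i.succ) := by
  unfold weightR
  rw [Fin.prod_univ_succ]
  rfl

lemma EE_zero (p b : Word → Word → ℝ) (s t : Word) : EE p b 0 s t = 0 := by
  simp [EE, weightR]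

lemma EE_succ {p b : Word → Word → ℝ} (hp : ∀ s t, 0 ≤ p s t) (n : ℕ) (s t : Word) (e : ℝ)
    (he : 0 ≤ e) (h : ∀ v, |b s v - p s v| ≤ e * p s v) :
    EE p b (n + 1) s t ≤ ∑' v, ENNReal.ofReal |b s v| * EE p b n v t +
      ENNReal.ofReal e * PN (fun u v => ENNReal.ofReal (p u v)) (n + 1) s t := by
  rw [← nStepE_eq]
  unfold nStepE EE
  rw [← path_rec n s t (fun u v => ENNReal.ofReal |b u v|)
    (fun τ => ENNReal.ofReal |weightR b n τ - weightR p n τ|), ← ENNReal.tsum_mul_left,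
    ← ENNReal.tsum_add]
  refine ENNReal.tsum_le_tsum fun σ => ?_
  rw [weightE_eq hp, ← ENNReal.ofReal_mul (abs_nonneg _), ← ENNReal.ofReal_mul he,
    ← ENNReal.ofReal_add (by positivity) (mul_nonneg he (weightR_nonneg hp _ _))]
  apply ENNReal.ofReal_le_ofReal
  rw [weightR_succ, weightR_succ]
  obtain ⟨σ, h0, h1, h2⟩ := σ
  simp only [h0]
  have hw := weightR_nonneg hp n (fun i => σ i.succ)
  set B := weightR b n (fun i => σ i.succ)
  set P := weightR p n (fun i => σ i.succ)
  have hv := h (σ 1)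
  calc |b s (σ 1) * B - p s (σ 1) * P| =
        |b s (σ 1) * (B - P) + (b s (σ 1) - p s (σ 1)) * P| := by ring_nf
    _ ≤ |b s (σ 1) * (B - P)| + |(b s (σ 1) - p s (σ 1)) * P| := abs_add_le _ _
    _ = |b s (σ 1)| * |B - P| + |b s (σ 1) - p s (σ 1)| * P := by
        rw [abs_mul, abs_mul, abs_of_nonneg hw]
    _ ≤ |b s (σ 1)| * |B - P| + (e * p s (σ 1)) * P := by gcongr
    _ = _ := by ring

lemma EE_sum {p b : Word → Word → ℝ} (hp : ∀ s t, 0 ≤ p s t) (Ω : Set Word)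
    (hb : ∀ s t, |b s t| ≤ p s t) (hout : ∀ u, ∀ v ∉ Ω, b u v = 0)
    (e : Word → ℝ) (he : ∀ u, 0 ≤ e u)
    (h : ∀ u ∈ Ω, ∀ v, |b u v - p u v| ≤ e u * p u v) (t s : Word) (hs : s ∈ Ω) :
    ∑' n, EE p b n s t ≤ ∑' u, GG (fun u v => ENNReal.ofReal (p u v)) s u *
      (ENNReal.ofReal (e u) * GG (fun u v => ENNReal.ofReal (p u v)) u t) := by
  set k : Word → Word → ℝ≥0∞ := fun u v => ENNReal.ofReal (p u v) with hk
  rw [ENNReal.tsum_eq_iSup_nat]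
  refine iSup_le fun N => ?_
  induction N generalizing s with
  | zero => simp
  | succ N ih =>
    rw [Finset.sum_range_succ', EE_zero, add_zero]
    refine le_trans ?_ (GG_poisson k (fun u => ENNReal.ofReal (e u) * GG k u t) s)
    calc _ ≤ ∑ n ∈ Finset.range N, (∑' v, ENNReal.ofReal |b s v| * EE p b n v t +
            ENNReal.ofReal (e s) * PN k (n + 1) s t) :=
          Finset.sum_le_sum fun n _ => EE_succ hp n s t (e s) (he s) (h s hs)
      _ = ENNReal.ofReal (e s) * ∑ n ∈ Finset.range N, PN k (n + 1) s t +
          ∑' v, ENNReal.ofReal |b s v| * ∑ n ∈ Finset.range N, EE p b n v t := by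
          rw [Finset.sum_add_distrib, add_comm, Finset.mul_sum]
          congr 1
          simp only [Finset.mul_sum]
          rw [Summable.tsum_finsetSum (fun _ _ => ENNReal.summable)]
      _ ≤ _ := by
          gcongr ?_ + ∑' v, ?_ with v
          · gcongr
            calc _ ≤ ∑ n ∈ Finset.range (N + 1), PN k n s t := by
                  rw [Finset.sum_range_succ']; exact le_self_add
              _ ≤ _ := ENNReal.sum_le_tsum _
          · by_cases hv : v ∈ Ω
            · exact mul_le_mul' (ENNReal.ofReal_le_ofReal (hb s v)) (ih v hv)
            · simp [hout s v hv]

lemma diff_le {p b : Word → Word → ℝ} (hp : ∀ s t, 0 ≤ p s t) (hb : ∀ s t, |b s t| ≤ p s t)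
    (n : ℕ) (s t : Word) (hfin : nStepE Set.univ p n s t ≠ ⊤) :
    ENNReal.ofReal |nStepR Set.univ b n s t - (nStepE Set.univ p n s t).toReal| ≤
      EE p b n s t := by
  by_cases hE : EE p b n s t = ⊤
  · rw [hE]; exact le_top
  unfold nStepE at hfin ⊢
  simp only [weightE_eq hp] at hfin ⊢
  have hs : Summable fun σ : pathSet (Set.univ : Set Word) n s t => weightR p n σ.1 := by
    have := ENNReal.summable_toReal hfin
    simpa only [ENNReal.toReal_ofReal (weightR_nonneg hp _ _)] using this
  have hsb : Summable fun σ : pathSet (Set.univ : Set Word) n s t => weightR b n σ.1 := by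
    refine Summable.of_norm_bounded hs fun σ => ?_
    unfold weightR
    rw [Real.norm_eq_abs, Finset.abs_prod]
    exact Finset.prod_le_prod (fun _ _ => abs_nonneg _) fun _ _ => hb _ _
  have hd := (hsb.sub hs).abs
  rw [← ENNReal.ofReal_tsum_of_nonneg (fun σ => weightR_nonneg hp _ _) hs,
    ENNReal.toReal_ofReal (tsum_nonneg fun σ => weightR_nonneg hp _ _)]
  unfold nStepR EE
  rw [← Summable.tsum_sub hsb hs, ← ENNReal.ofReal_tsum_of_nonneg (fun σ => abs_nonneg _) hd]
  apply ENNReal.ofReal_le_ofReal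
  have := norm_tsum_le_tsum_norm (f := fun σ : pathSet (Set.univ : Set Word) n s t =>
    weightR b n σ.1 - weightR p n σ.1) hd
  simpa only [Real.norm_eq_abs] using this

lemma green_diff {p b : Word → Word → ℝ} (hp : ∀ s t, 0 ≤ p s t) (hb : ∀ s t, |b s t| ≤ p s t)
    (s t : Word) (hfin : greenE Set.univ p s t ≠ ⊤) (c : ℝ) (hc : 0 ≤ c)
    (h : ∑' n, EE p b n s t ≤ ENNReal.ofReal c) :
    |greenR Set.univ b s t - (greenE Set.univ p s t).toReal| ≤ c := by
  have hfn : ∀ n, nStepE Set.univ p n s t ≠ ⊤ := fun n => ENNReal.ne_top_of_tsum_ne_top hfin n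
  have hE : ∑' n, ENNReal.ofReal |nStepR Set.univ b n s t - (nStepE Set.univ p n s t).toReal| ≤
      ENNReal.ofReal c :=
    (ENNReal.tsum_le_tsum fun n => diff_le hp hb n s t (hfn n)).trans h
  have hsum : Summable fun n => |nStepR Set.univ b n s t - (nStepE Set.univ p n s t).toReal| := by
    have := ENNReal.summable_toReal (ne_top_of_le_ne_top ENNReal.ofReal_ne_top hE)
    simpa only [ENNReal.toReal_ofReal (abs_nonneg _)] using this
  have hsP : Summable fun n => (nStepE Set.univ p n s t).toReal := ENNReal.summable_toReal hfin
  have hsB : Summable fun n => nStepR Set.univ b n s t := by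
    have := hsum.of_abs.add hsP
    simpa using this
  unfold greenR greenE
  rw [ENNReal.tsum_toReal_eq hfn, ← Summable.tsum_sub hsB hsP]
  have h1 := norm_tsum_le_tsum_norm (f := fun n =>
    nStepR Set.univ b n s t - (nStepE Set.univ p n s t).toReal) hsum
  simp only [Real.norm_eq_abs] at h1
  refine h1.trans ?_
  rw [← ENNReal.ofReal_tsum_of_nonneg (fun n => abs_nonneg _) hsum] at hE
  exact (ENNReal.ofReal_le_ofReal_iff hc).1 hE

lemma exists_rate (S : ℕ) (lam q : ℝ) (hl : lam ∈ Set.Ioo (0 : ℝ) 1) (hq : q ∈ Set.Ioo (0 : ℝ) 1) :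
    ∃ r : ℝ, 0 < r ∧ r < 1 ∧ q ≤ r ∧ lam < r ^ S := by
  have hc : Filter.Tendsto (fun r : ℝ => r ^ S) (nhdsWithin 1 (Set.Iio 1)) (nhds 1) := by
    have : Continuous fun r : ℝ => r ^ S := by fun_prop
    have h := this.tendsto 1
    rw [one_pow] at h
    exact h.mono_left nhdsWithin_le_nhds
  have e1 := hc.eventually_const_lt hl.2
  have e2 : ∀ᶠ r in nhdsWithin (1 : ℝ) (Set.Iio 1), q < r :=
    nhdsWithin_le_nhds (lt_mem_nhds hq.2)
  have e3 : ∀ᶠ r in nhdsWithin (1 : ℝ) (Set.Iio 1), r < 1 := self_mem_nhdsWithin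
  obtain ⟨r, h1, h2, h3⟩ := (e1.and (e2.and e3)).exists
  exact ⟨r, hq.1.trans h2, h3, h2.le, h1⟩

end helpers

/-- The concluding Remark of the paper: the ratio of the Martin kernels of `b` and `p`
tends to `1` at every end `ω` in the closure of `Δ_z`: for every `ε > 0`, for all `s`
sufficiently close to `ω` one has `|G_b(s,t) − G_p(s,t)| ≤ ε G_p(s,t)` for all `t`
sufficiently close to `ω`. -/
theorem martin_kernel_ratio (p : Word → Word → ℝ) (hp : ∀ s t, 0 ≤ p s t)
    (hsub : Substochastic p)
    (S : ℕ) (δ₀ : ℝ) (hδ₀ : δ₀ ∈ Set.Ioo (0 : ℝ) 1) (K : ℕ)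
    (m : Word → ℝ) (lam : ℝ) (hlam : lam ∈ Set.Ioo (0 : ℝ) 1)
    (h1 : H1 p S) (h2 : H2 p δ₀) (h3 : H3 p δ₀ K) (h4 : H4 p m lam)
    (z : Word) (q C : ℝ) (hq : q ∈ Set.Ioo (0 : ℝ) 1) (hC : 0 < C)
    (b : Word → Word → ℝ) (hb : Perturb p b z q C) :
    ∀ ω : ℕ → Bool, endWord ω z.length = z → ∀ ε > (0 : ℝ),
      ∃ k, z.length ≤ k ∧ ∀ s ∈ Delta (endWord ω k),
        ∃ l, z.length ≤ l ∧ ∀ t ∈ Delta (endWord ω l),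
          |greenR (Delta z) b s t - (greenE Set.univ p s t).toReal| ≤
            ε * (greenE Set.univ p s t).toReal := by
  classical
  intro ω hω ε hε
  obtain ⟨r, hr0, hr1, hqr, hlr⟩ := exists_rate S lam q hlam hq
  set k : Word → Word → ℝ≥0∞ := fun u v => ENNReal.ofReal (p u v) with hkdef
  set L : ℝ≥0∞ := (ENNReal.ofReal δ₀)⁻¹ ^ K with hLdef
  set g : ℝ≥0∞ := (1 - ENNReal.ofReal lam)⁻¹ with hgdef
  set R : ℝ≥0∞ := ENNReal.ofReal r with hRdef
  have hharn : Harn k L := harn_of_H3 hδ₀ h3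
  have hL1 : 1 ≤ L := by
    apply one_le_pow₀
    rw [ENNReal.one_le_inv]; simpa using hδ₀.2.le
  have hLt : L ≠ ⊤ := by
    apply ENNReal.pow_ne_top
    simpa using hδ₀.1
  have hg : ∀ x, GG k x x ≤ g := fun x => GG_diag hp h1 hlam.1.le h4 x
  have hgt : g ≠ ⊤ := by
    simpa [hgdef, tsub_eq_zero_iff_le] using hlam.2
  have hk : ∀ s t, k s t ≠ 0 → treeDist s t ≤ S := by
    intro s t hst
    by_contra hc
    exact hst (by simp [hkdef, h1 s t (by omega)])
  have hR0 : R ≠ 0 := by simpa [hRdef] using hr0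
  have hR1 : R < 1 := by simpa [hRdef] using hr1
  set cA : ℝ≥0∞ := (1 - ENNReal.ofReal lam / R ^ S)⁻¹ * (1 - ENNReal.ofReal lam)⁻¹ with hcA
  have hA : ∀ x, ∑' u, GG k x u * (R ^ u.length * GG k u x) ≤ R ^ x.length * cA :=
    fun x => loop_sum hp h1 hlam.1.le h4 R hR0 hR1.le x
  have hcAt : cA ≠ ⊤ := by
    refine ENNReal.mul_ne_top ?_ hgt
    have : ENNReal.ofReal lam / R ^ S < 1 := by
      rw [ENNReal.div_lt_iff (Or.inl (pow_ne_zero _ hR0))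
        (Or.inl (ENNReal.pow_ne_top ENNReal.ofReal_ne_top)), one_mul, hRdef,
        ← ENNReal.ofReal_pow hr0.le]
      exact (ENNReal.ofReal_lt_ofReal_iff (by positivity)).2 hlr
    simpa [tsub_eq_zero_iff_le] using this
  set D : ℝ := C / δ₀ + (r ^ (z.length + S))⁻¹ with hD
  have hδ := hδ₀.1
  have hD0 : 0 < D := by positivity
  set M : ℝ≥0∞ := ENNReal.ofReal D * (cTwo S L g ^ 2 * g * cA * (2 * (1 - R)⁻¹)) with hM
  have hMt : M ≠ ⊤ := by
    have hc1 : cOne S L g ≠ ⊤ := ENNReal.mul_ne_top (ENNReal.natCast_ne_top _)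
      (ENNReal.mul_ne_top (ENNReal.mul_ne_top (ENNReal.pow_ne_top hLt) hgt)
        (ENNReal.pow_ne_top hLt))
    have hc2 : cTwo S L g ≠ ⊤ :=
      ENNReal.mul_ne_top hc1 (ENNReal.mul_ne_top (ENNReal.mul_ne_top hLt hgt) hLt)
    have hR2 : (1 - R)⁻¹ ≠ ⊤ := by
      simpa [tsub_eq_zero_iff_le] using hR1
    exact ENNReal.mul_ne_top ENNReal.ofReal_ne_top (ENNReal.mul_ne_top (ENNReal.mul_ne_top
      (ENNReal.mul_ne_top (ENNReal.pow_ne_top hc2) hgt) hcAt)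
      (ENNReal.mul_ne_top (by simp) hR2))
  have hlim : Filter.Tendsto (fun n : ℕ => M * R ^ n) Filter.atTop (nhds 0) := by
    have := ENNReal.Tendsto.const_mul (ENNReal.tendsto_pow_atTop_nhds_zero_of_lt_one hR1)
      (Or.inr hMt)
    rwa [mul_zero] at this
  have hev : ∀ᶠ n in Filter.atTop, M * R ^ n < ENNReal.ofReal ε :=
    hlim.eventually_lt_const (by simpa using hε)
  obtain ⟨n, hn, hzn⟩ := (hev.and (Filter.eventually_ge_atTop z.length)).exists
  refine ⟨n, hzn, fun s hs => ⟨n, hzn, fun t ht => ?_⟩⟩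
  have hlen : (endWord ω n).length = n := by simp [endWord]
  have hzy : z <:+ endWord ω n := by
    rw [← hω]
    unfold endWord
    obtain ⟨j, rfl⟩ := Nat.exists_eq_add_of_le hzn
    rw [List.range_add, List.reverse_append, List.map_append]
    exact List.suffix_append _ _
  have hsz : s ∈ Delta z := hzy.trans hs
  set bt : Word → Word → ℝ := fun u v => if u ∈ Delta z ∧ v ∈ Delta z then b u v else 0 with hbt
  have hin : ∀ u ∈ Delta z, ∀ v ∈ Delta z, bt u v = b u v := by
    intro u hu v hv
    simp only [hbt]; rw [if_pos ⟨hu, hv⟩]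
  have hout : ∀ u, ∀ v ∉ Delta z, bt u v = 0 := by
    intro u v hv
    simp only [hbt]; rw [if_neg (fun h => hv h.2)]
  have hbp : ∀ u v, |bt u v| ≤ p u v := by
    intro u v
    by_cases h : u ∈ Delta z ∧ v ∈ Delta z
    · rw [hin u h.1 v h.2]; exact (hb u v h.1 h.2).1
    · simp only [hbt]; rw [if_neg h, abs_zero]; exact hp u v
  have hdiff : ∀ u ∈ Delta z, ∀ v, |bt u v - p u v| ≤ (D * r ^ u.length) * p u v := by
    intro u hu v
    by_cases hp0 : p u v = 0
    · have := hbp u v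
      rw [hp0] at this ⊢
      rw [abs_nonpos_iff.1 this]; simp
    have hpos : 0 < p u v := lt_of_le_of_ne (hp u v) (Ne.symm hp0)
    have hru : 0 < r ^ u.length := by positivity
    have hrz : 0 < (r ^ (z.length + S))⁻¹ := by positivity
    by_cases hv : v ∈ Delta z
    · rw [hin u hu v hv]
      have hpd := h2 u v hpos
      calc |b u v - p u v| ≤ C * q ^ u.length := (hb u v hu hv).2
        _ ≤ C * r ^ u.length := by
            have := hq.1.le
            gcongr
        _ = (C / δ₀ * r ^ u.length) * δ₀ := by field_simp
        _ ≤ (C / δ₀ * r ^ u.length) * p u v := by gcongr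
        _ ≤ (D * r ^ u.length) * p u v := by
            gcongr
            rw [hD]; linarith
    · rw [hout u v hv, zero_sub, abs_neg, abs_of_pos hpos]
      have hd : treeDist u v ≤ S := by
        by_contra hc
        exact hp0 (h1 u v (by omega))
      have hul := length_le_of_cross z u v S hu hv hd
      have h5 : r ^ (z.length + S) ≤ r ^ u.length := pow_le_pow_of_le_one hr0.le hr1.le hul
      have h6 : 1 ≤ D * r ^ u.length := by
        calc 1 = (r ^ (z.length + S))⁻¹ * r ^ (z.length + S) := by
              rw [inv_mul_cancel₀ (by positivity)]
          _ ≤ D * r ^ u.length := by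
              have : 0 < C / δ₀ := by positivity
              gcongr
              rw [hD]; linarith
      nlinarith
  have hgr : greenR (Delta z) b s t = greenR Set.univ bt s t := by
    unfold greenR
    exact tsum_congr fun j => nStepR_ext (Delta z) b bt hin hout j s t hsz
  have hGt : GG k s t ≠ ⊤ := harn_fin hharn hLt hg hgt s t
  have hGE : greenE Set.univ p s t = GG k s t := greenE_eq p s t
  rw [hgr]
  refine green_diff hp hbp s t (by rw [hGE]; exact hGt) _ (by positivity) ?_
  rw [hGE, ENNReal.ofReal_mul hε.le, ENNReal.ofReal_toReal hGt]
  have hms := main_sum hk hharn hL1 hg R cA hA (endWord ω n) s t hs ht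
  rw [hlen] at hms
  calc _ ≤ _ := EE_sum hp (Delta z) hbp hout (fun u => D * r ^ u.length)
        (fun u => by positivity) hdiff t s hsz
    _ = ENNReal.ofReal D * ∑' u, GG k s u * (R ^ u.length * GG k u t) := by
        rw [← ENNReal.tsum_mul_left]
        refine tsum_congr fun u => ?_
        rw [ENNReal.ofReal_mul hD0.le, ENNReal.ofReal_pow hr0.le]
        ring
    _ ≤ ENNReal.ofReal D * ((cTwo S L g ^ 2 * g * cA * (2 * (1 - R)⁻¹)) * R ^ n * GG k s t) :=
        mul_le_mul_right hms _
    _ = (M * R ^ n) * GG k s t := by rw [hM]; ring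
    _ ≤ _ := mul_le_mul_left hn.le _

end Paper
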